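/- arXiv:2210.00561 — 2 statements merged into one kernel-verified Lean document; each statement's English description precedes it below -/
import Mathlib

section
/- Let k ≥ 3 and n ≥ 3 be odd integers and set d = (1 − 2k^n)^n. Then d + 1 = 1 − a^n with a = 2k^n − 1 ≥ 53, and n divides the class number of the imaginary quadratic field ℚ(√(d+1)). -/
open IntermediateField NumberField

/-- The quadratic field `ℚ(√D)`, realized inside `ℂ` by adjoining the principal
square root of `D`. -/
noncomputable def quadField (D : ℤ) : IntermediateField ℚ ℂ :=
  ℚ⟮(D : ℂ) ^ ((1 : ℂ) / 2)⟯

/-- The class number of the quadratic field `ℚ(√D)`. -/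
noncomputable def quadClassNumber (D : ℤ) : ℕ :=
  Nat.card (ClassGroup (𝓞 (quadField D)))

theorem pow_form {R : Type*} [CommRing R] (w : R) (E : ℤ) (hE : 4 ∣ E) (hw : w * w = -(E : R))
    (t : ℕ) (ht : Odd t) (h1 : 1 < t) :
    ∃ C B : ℤ, C ≠ 0 ∧ (1 + w) ^ t = 1 - E * C + B * w := by
  obtain ⟨F, rfl⟩ := hE
  have step1 : ∀ j : ℕ, ∃ c b : ℤ, (2:ℤ) ∣ c - j ∧
      ((1 + w) ^ 2) ^ j = 1 - ((4 * F : ℤ) : R) * c + ((2 * b : ℤ) : R) * w := by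
    intro j
    induction j with
    | zero => exact ⟨0, 0, by simp, by simp⟩
    | succ j ih =>
      obtain ⟨c, b, hc, h⟩ := ih
      refine ⟨c + 1 - 4 * F * c + 4 * b, b + 1 - 4 * F * c - 4 * F * b, ?_, ?_⟩
      · obtain ⟨q, hq⟩ := hc
        refine ⟨q - 2 * F * c + 2 * b, ?_⟩
        push_cast; linear_combination hq
      · rw [pow_succ, h]
        push_cast at hw ⊢
        linear_combination (1 - 4 * F * c + 4 * b + 2 * b * w : R) * hw
  have step2 : ∀ (j : ℕ), Odd j → ∀ i : ℕ, ∃ c b : ℤ, Odd c ∧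
      (((1 + w) ^ 2) ^ j) ^ (2 ^ i) = 1 - ((4 * F : ℤ) : R) * ((2 ^ i * c : ℤ) : R)
        + ((2 ^ (i + 1) * b : ℤ) : R) * w := by
    intro j hj i
    induction i with
    | zero =>
      obtain ⟨c, b, hc, h⟩ := step1 j
      refine ⟨c, b, ?_, by simpa using h⟩
      obtain ⟨q, rfl⟩ := hj
      push_cast at hc
      rw [Int.odd_iff]; omega
    | succ i ih =>
      obtain ⟨c, b, hc, h⟩ := ih
      refine ⟨c - 2 * F * 2 ^ i * c ^ 2 + 2 * 2 ^ i * b ^ 2, b - 4 * F * 2 ^ i * b * c, ?_, ?_⟩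
      · obtain ⟨q, rfl⟩ := hc
        rw [Int.odd_iff]
        have : (2 * q + 1 - 2 * F * 2 ^ i * (2 * q + 1) ^ 2 + 2 * 2 ^ i * b ^ 2) =
          2 * (q - F * 2 ^ i * (2 * q + 1) ^ 2 + 2 ^ i * b ^ 2) + 1 := by ring
        omega
      · rw [pow_succ 2 i, pow_mul, h]
        push_cast at hw ⊢
        linear_combination ((2 ^ (i + 1) * b : R) ^ 2) * hw
  obtain ⟨s, rfl⟩ := ht
  have hs : s ≠ 0 := by omega
  obtain ⟨i, j, hj, rfl⟩ := Nat.exists_eq_two_pow_mul_odd hs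
  obtain ⟨c, b, hc, h⟩ := step2 j hj i
  refine ⟨2 ^ i * (c + 2 * b), 1 - 4 * F * (2 ^ i * c) + 2 ^ (i + 1) * b, ?_, ?_⟩
  · have : c + 2 * b ≠ 0 := by
      obtain ⟨q, rfl⟩ := hc; omega
    positivity
  · have e : (1 + w) ^ (2 * (2 ^ i * j) + 1) = (((1 + w) ^ 2) ^ j) ^ (2 ^ i) * (1 + w) := by
      rw [pow_succ, ← pow_mul, ← pow_mul]; congr 2; ring
    rw [e, h]
    push_cast at hw ⊢
    linear_combination (2 ^ (i + 1) * b : R) * hw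

theorem lucas_int {R : Type*} [CommRing R] (x y : R) (P N : ℤ) (hP : x + y = P) (hN : x * y = N)
    (t : ℕ) : ∃ V : ℤ, x ^ t + y ^ t = V ∧ (Odd t → P ∣ V) := by
  induction t using Nat.twoStepInduction with
  | zero => exact ⟨2, by norm_num, by simp⟩
  | one => exact ⟨P, by simpa using hP, by simp⟩
  | more t ih1 ih2 =>
    obtain ⟨V, h, hd⟩ := ih1
    obtain ⟨W, h', -⟩ := ih2
    refine ⟨P * W - N * V, ?_, ?_⟩
    · push_cast
      rw [← h, ← h', ← hP, ← hN]; ring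
    · intro ho
      have : Odd t := by
        rw [Nat.odd_add] at ho; exact ho.mpr (by decide)
      exact dvd_sub (dvd_mul_right _ _) ((hd this).mul_left _)

theorem lucas_parity {R : Type*} [CommRing R] (x y : R) (P N : ℤ) (hP : x + y = P)
    (hN : x * y = N) (hPo : Odd P) (hNo : Odd N) (j : ℕ) :
    ∃ U V W : ℤ, x ^ (3 * j) + y ^ (3 * j) = U ∧ x ^ (3 * j + 1) + y ^ (3 * j + 1) = V ∧
      x ^ (3 * j + 2) + y ^ (3 * j + 2) = W ∧ Even U ∧ Odd V ∧ Odd W := by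
  induction j with
  | zero =>
    refine ⟨2, P, P * P - N * 2, by norm_num, by simpa using hP, ?_, by decide, hPo, ?_⟩
    · push_cast; rw [← hP, ← hN]; ring
    · exact (hPo.mul hPo).sub_even (by simp)
  | succ j ih =>
    obtain ⟨U, V, W, hU, hV, hW, eU, oV, oW⟩ := ih
    refine ⟨P * W - N * V, P * (P * W - N * V) - N * W,
      P * (P * (P * W - N * V) - N * W) - N * (P * W - N * V), ?_, ?_, ?_, ?_, ?_, ?_⟩
    · push_cast; rw [← hV, ← hW, ← hP, ← hN]; ring
    · push_cast; rw [← hV, ← hW, ← hP, ← hN]; ring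
    · push_cast; rw [← hV, ← hW, ← hP, ← hN]; ring
    · exact (hPo.mul oW).sub_odd (hNo.mul oV)
    · exact (((hPo.mul oW).sub_odd (hNo.mul oV)).mul_left P).sub_odd (hNo.mul oW)
    · exact (hPo.mul ((((hPo.mul oW).sub_odd (hNo.mul oV)).mul_left P).sub_odd
        (hNo.mul oW))).sub_even (((hPo.mul oW).sub_odd (hNo.mul oV)).mul_left N)

theorem core_two (β : ℂ) (N : ℤ) (hP : β + star β = 2) (hN : β * star β = N)
    (h4 : 4 ∣ N - 1) (t : ℕ) (ht : Odd t) (h1 : 1 < t) (hN1 : 1 < N)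
    (h : β ^ t + star β ^ t = 2 ∨ β ^ t + star β ^ t = -2) : False := by
  have hw : (β - 1) * (β - 1) = -((N - 1 : ℤ) : ℂ) := by
    push_cast; rw [← hN]; linear_combination β * hP
  have hs : star β = 1 + -(β - 1) := by linear_combination hP
  have hw2 : (-(β - 1)) * (-(β - 1)) = -((N - 1 : ℤ) : ℂ) := by rw [← hw]; ring
  obtain ⟨C, B, hC, e⟩ := pow_form (β - 1) (N - 1) h4 hw t ht h1
  have e2 : star (β ^ t) = 1 - ((N - 1 : ℤ) : ℂ) * C + B * -(β - 1) := by
    have := congrArg star e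
    rw [show (1 + (β - 1)) = β by ring] at this
    rw [this, ← show star β - 1 = -(β - 1) by rw [hs]; ring]
    simp
  rw [show (1 + (β - 1)) = β by ring] at e
  rw [star_pow] at e2
  rw [e, e2] at h
  obtain ⟨F, hF⟩ := h4
  rw [hF] at h
  have hF0 : F ≠ 0 := by rintro rfl; omega
  rcases h with h | h
  · have : (F * C : ℂ) = 0 := by push_cast at h; linear_combination (-1/8 : ℂ) * h
    norm_cast at this
    simp [hF0, hC] at this
  · have : (4 * (F * C) : ℂ) = 2 := by push_cast at h; linear_combination (-1/2 : ℂ) * h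
    norm_cast at this
    omega

theorem core (β : ℂ) (P N : ℤ) (hP : β + star β = P) (hN : β * star β = N)
    (h4 : 4 ∣ N - 1) (t : ℕ) (ht : Odd t) (h1 : 1 < t) (hN1 : 1 < N)
    (h : β ^ t + star β ^ t = 2) : False := by
  have hNo : Odd N := by rw [Int.odd_iff]; omega
  obtain ⟨V, hV, hd⟩ := lucas_int β (star β) P N hP hN t
  have hV2 : V = 2 := by rw [h] at hV; exact_mod_cast hV.symm
  subst hV2
  have hd := hd ht
  rcases Int.even_or_odd P with hPe | hPo
  · obtain ⟨q, rfl⟩ := hPe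
    have hq : q ∣ 1 := by
      have : 2 * q ∣ 2 * 1 := by simpa [two_mul] using hd
      exact (mul_dvd_mul_iff_left (by norm_num)).mp this
    rcases Int.isUnit_iff.mp (isUnit_of_dvd_one hq) with rfl | rfl
    · exact core_two β N (by rw [hP]; norm_num) hN h4 t ht h1 hN1 (Or.inl h)
    · refine core_two (-β) N ?_ (by simpa using hN) h4 t ht h1 hN1 (Or.inr ?_)
      · rw [star_neg, ← neg_add, hP]; norm_num
      · rw [star_neg, ht.neg_pow, ht.neg_pow, ← neg_add, h]
  · obtain ⟨U, V, W, hU, hV, hW, eU, oV, oW⟩ :=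
      lucas_parity β (star β) P N hP hN hPo hNo (t / 3)
    have h3 : t = 3 * (t / 3) := by
      have : t % 3 = 0 ∨ t = 3 * (t / 3) + 1 ∨ t = 3 * (t / 3) + 2 := by omega
      rcases this with e | e | e
      · omega
      · rw [← e, h] at hV
        have : V = 2 := by exact_mod_cast hV.symm
        subst this; exact absurd oV (by decide)
      · rw [← e, h] at hW
        have : W = 2 := by exact_mod_cast hW.symm
        subst this; exact absurd oW (by decide)
    have hto : Odd (t / 3) := by
      rw [h3] at ht; exact (Nat.odd_mul.mp ht).2
    obtain ⟨V', hV', hd'⟩ := lucas_int (β ^ 3) (star β ^ 3) (P * (P ^ 2 - 3 * N)) (N ^ 3)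
      (by push_cast; rw [← hP, ← hN]; ring) (by push_cast; rw [← hN]; ring) (t / 3)
    rw [← pow_mul, ← pow_mul, ← h3, h] at hV'
    have hV'2 : V' = 2 := by exact_mod_cast hV'.symm
    subst hV'2
    have hd' := (dvd_mul_left _ _).trans (hd' hto)
    have hP2 : P ≤ 2 := Int.le_of_dvd (by norm_num) hd
    have hP2' : -P ≤ 2 := Int.le_of_dvd (by norm_num) ((neg_dvd).mpr hd)
    have hle : -(P ^ 2 - 3 * N) ≤ 2 := Int.le_of_dvd (by norm_num) ((neg_dvd).mpr hd')
    have : N ≥ 5 := by omega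
    nlinarith


theorem quad_mem (D : ℤ) (r : ℂ) (hr : r * r = D) (x : ℂ) (hx : x ∈ ℚ⟮r⟯) :
    ∃ p q : ℚ, x = p + q * r := by
  induction hx using IntermediateField.adjoin_induction with
  | mem x hx =>
    rw [Set.mem_singleton_iff] at hx
    exact ⟨0, 1, by simp [hx]⟩
  | algebraMap x => exact ⟨x, 0, by simp⟩
  | add x y _ _ hx hy =>
    obtain ⟨p, q, rfl⟩ := hx
    obtain ⟨p', q', rfl⟩ := hy
    exact ⟨p + p', q + q', by push_cast; ring⟩
  | mul x y _ _ hx hy =>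
    obtain ⟨p, q, rfl⟩ := hx
    obtain ⟨p', q', rfl⟩ := hy
    exact ⟨p * p' + q * q' * D, p * q' + q * p', by
      push_cast; linear_combination (q * q' : ℂ) * hr⟩
  | inv x _ hx =>
    obtain ⟨p, q, rfl⟩ := hx
    by_cases h0 : (p + q * r : ℂ) = 0
    · exact ⟨0, 0, by simp [h0]⟩
    by_cases h1 : (p - q * r : ℂ) = 0
    · refine ⟨1 / (2 * p), 0, ?_⟩
      have : (q * r : ℂ) = p := by linear_combination -h1
      rw [this]; push_cast; rw [← two_mul]; simp
    · have h2 : (p ^ 2 - q ^ 2 * D : ℂ) ≠ 0 := by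
        have := mul_ne_zero h0 h1
        rwa [show (p + q * r : ℂ) * (p - q * r) = p ^ 2 - q ^ 2 * D by
          linear_combination (-q ^ 2 : ℂ) * hr] at this
      refine ⟨p / (p ^ 2 - q ^ 2 * D), - q / (p ^ 2 - q ^ 2 * D), ?_⟩
      push_cast
      apply inv_eq_of_mul_eq_one_left
      field_simp
      linear_combination (-q ^ 2 : ℂ) * hr

theorem root_props (D : ℤ) (hD : D < 0) (r : ℂ) (hr : r * r = D) : star r = -r := by
  have h1 := congrArg Complex.re hr
  have h2 := congrArg Complex.im hr
  simp at h1 h2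
  have hD' : (D : ℝ) < 0 := by exact_mod_cast hD
  have h3 : r.re = 0 := by
    by_contra h
    have : r.im = 0 := by
      have : r.re * r.im = 0 := by linarith
      simpa [h] using this
    rw [this] at h1; nlinarith [mul_self_nonneg r.re]
  apply Complex.ext <;> simp [h3]

theorem rat_int (z : ℂ) (q : ℚ) (hz : z = q) (hi : IsIntegral ℤ z) : ∃ m : ℤ, z = m := by
  rw [hz] at hi
  have : IsIntegral ℤ q := by
    have h : (q : ℂ) = algebraMap ℚ ℂ q := by simp
    rw [h] at hi
    exact (isIntegral_algebraMap_iff (algebraMap ℚ ℂ).injective).mp hi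
  obtain ⟨m, hm⟩ := IsIntegrallyClosed.isIntegral_iff.mp this
  exact ⟨m, by rw [hz, ← hm]; simp⟩

theorem star_integral (z : ℂ) (hi : IsIntegral ℤ z) : IsIntegral ℤ (star z) :=
  hi.map (Complex.conjAe.restrictScalars ℤ)

theorem trace_norm (D : ℤ) (hD : D < 0) (r : ℂ) (hr : r * r = D) (x : 𝓞 ℚ⟮r⟯) :
    ∃ P N : ℤ, (((x : ℚ⟮r⟯) : ℂ)) + star ((x : ℚ⟮r⟯) : ℂ) = P ∧
      ((x : ℚ⟮r⟯) : ℂ) * star ((x : ℚ⟮r⟯) : ℂ) = N := by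
  have hi : IsIntegral ℤ ((x : ℚ⟮r⟯) : ℂ) := by
    have := x.isIntegral_coe
    exact this.map ((ℚ⟮r⟯.val).restrictScalars ℤ)
  obtain ⟨p, q, h⟩ := quad_mem D r hr _ (x : ℚ⟮r⟯).2
  have hs := root_props D hD r hr
  have hst : star ((x : ℚ⟮r⟯) : ℂ) = p - q * r := by
    rw [h, star_add, star_mul', hs]; simp; ring
  obtain ⟨P, hP⟩ := rat_int _ (2 * p) (by rw [hst, h]; push_cast; ring)
    (hi.add (star_integral _ hi))
  obtain ⟨N, hN⟩ := rat_int _ (p ^ 2 - q ^ 2 * D) (by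
    rw [hst, h]; push_cast; linear_combination (-q ^ 2 : ℂ) * hr)
    (hi.mul (star_integral _ hi))
  exact ⟨P, N, hP, hN⟩


theorem unit_norm (z w : ℂ) (hzw : z * w = 1) (N M : ℤ) (hN : z * star z = N)
    (hM : w * star w = M) : N = 1 := by
  have h1 : (N : ℂ) * M = 1 := by
    have h2 : star z * star w = 1 := by
      rw [← star_mul', hzw, star_one]
    rw [← hN, ← hM]; linear_combination hzw + z * w * h2 - h2 + h2
  have h1' : N * M = 1 := by exact_mod_cast h1
  have h0 : 0 ≤ N := by
    have : z * star z = ((Complex.normSq z : ℝ) : ℂ) := Complex.mul_conj z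
    rw [this] at hN
    have : Complex.normSq z = N := by exact_mod_cast hN
    have h := Complex.normSq_nonneg z
    rw [this] at h; exact_mod_cast h
  rcases Int.isUnit_iff.mp (IsUnit.of_mul_eq_one _ h1') with h | h <;> omega

theorem unit_cases (z : ℂ) (T : ℤ) (hT : z + star z = T) (hN : z * star z = 1) :
    (Odd T ∧ z ^ 6 = 1) ∨ z ^ 4 = 1 := by
  have hq : z * z = T * z - 1 := by rw [← hT, ← hN]; ring
  have e1 : (2 * z.re : ℝ) = T := by
    have := congrArg Complex.re hT
    simp at this; linarith
  have e2 : z.re * z.re + z.im * z.im = 1 := by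
    have := congrArg Complex.re hN
    simp at this; linarith
  have hT2 : (T : ℝ) * T ≤ 4 := by rw [← e1]; nlinarith [mul_self_nonneg z.im]
  have hT3 : T * T ≤ 4 := by exact_mod_cast hT2
  have hl : -2 ≤ T := by nlinarith
  have hu : T ≤ 2 := by nlinarith
  have him : T * T = 4 → z * z = 1 := by
    intro h
    have h' : (T : ℝ) * T = 4 := by exact_mod_cast h
    have h0 : z.im = 0 := by
      rw [← e1] at h'
      have : z.im * z.im = 0 := by linarith
      simpa using this
    apply Complex.ext <;> simp [h0] at e2 ⊢
    exact e2
  have hc : T = -2 ∨ T = -1 ∨ T = 0 ∨ T = 1 ∨ T = 2 := by omega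
  rcases hc with rfl | rfl | rfl | rfl | rfl
  · right; rw [show z ^ 4 = (z * z) * (z * z) by ring, him (by norm_num)]; norm_num
  · left; refine ⟨by decide, ?_⟩
    push_cast at hq
    linear_combination (z^4 - z^3 + z - 1 : ℂ) * hq
  · right; push_cast at hq; rw [show z ^ 4 = (z * z) * (z * z) by ring, hq]; norm_num
  · left; refine ⟨by decide, ?_⟩
    push_cast at hq
    linear_combination (z^4 + z^3 - z - 1 : ℂ) * hq
  · right; rw [show z ^ 4 = (z * z) * (z * z) by ring, him (by norm_num)]; norm_num

theorem pow_of_order {M : Type*} [Monoid M] (z : M) (s e : ℕ) (hz : z ^ s = 1)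
    (he : e % s = 1 % s) : z ^ e = z := by
  rw [pow_eq_pow_mod e hz, he, ← pow_eq_pow_mod 1 hz, pow_one]

/-- The arithmetic heart: a unit times `α = 1 + 2δ` is not a proper odd power. -/
theorem no_power {R : Type*} [CommRing R] (φ : R →+* ℂ) (hφ : Function.Injective φ)
    (htn : ∀ x : R, ∃ P N : ℤ, φ x + star (φ x) = P ∧ φ x * star (φ x) = N)
    (a : ℤ) (h4 : 4 ∣ a - 1) (ha : 1 < a) (m t : ℕ) (hm : 0 < m) (ht : Odd t) (ht1 : 1 < t)
    (δ β : R) (hδ : star (φ δ) = -φ δ) (hα : (1 + 2 * δ) * (1 - 2 * δ) = (a : R) ^ (m * t))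
    (u : Rˣ) (h : β ^ t * u = 1 + 2 * δ) : False := by
  obtain ⟨T, N1, hT, hN1⟩ := htn (u : R)
  obtain ⟨T2, N2, hT2, hN2⟩ := htn ((u⁻¹ : Rˣ) : R)
  have hu1 : N1 = 1 := unit_norm _ _ (by rw [← map_mul]; simp) _ _ hN1 hN2
  have hu2 : N2 = 1 := unit_norm _ _ (by rw [← map_mul]; simp) _ _ hN2 hN1
  subst hu1 hu2
  rw [Int.cast_one] at hN1 hN2
  have hsα : star (φ (1 + 2 * δ)) = φ (1 - 2 * δ) := by
    simp only [map_add, map_sub, map_mul, map_one, map_ofNat, star_add, star_mul', hδ, star_one,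
      star_ofNat]
    ring
  -- if `u` is a `t`-th power we are done
  have key : ∀ v : Rˣ, v ^ t = u → False := by
    intro v hv
    obtain ⟨P, N, hP, hN⟩ := htn (β * v)
    have hb : (β * v) ^ t = 1 + 2 * δ := by
      rw [mul_pow, ← h, ← hv]; simp
    have hb' : φ (β * v) ^ t = φ (1 + 2 * δ) := by rw [← map_pow, hb]
    have hNt : N ^ t = (a ^ m) ^ t := by
      have : ((N ^ t : ℤ) : ℂ) = ((a ^ m) ^ t : ℤ) := by
        push_cast
        rw [← hN, mul_pow, ← star_pow, hb', hsα, ← map_mul, hα, ← pow_mul]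
        simp
      exact_mod_cast this
    have hNa : N = a ^ m := ht.strictMono_pow.injective hNt
    refine core _ P N hP hN ?_ t ht ht1 ?_ ?_
    · rw [hNa]
      have := sub_dvd_pow_sub_pow a 1 m
      rw [one_pow] at this
      exact h4.trans this
    · rw [hNa]; exact one_lt_pow₀ ha (by omega)
    · rw [← star_pow, hb', hsα, ← map_add]
      rw [show (1 + 2 * δ + (1 - 2 * δ)) = 2 by ring, map_ofNat]
  have hup : ∀ s : ℕ, φ u ^ s = 1 → u ^ s = 1 := by
    intro s hs
    apply Units.ext
    apply hφ
    simpa using hs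
  have key2 : ∀ s : ℕ, φ u ^ s = 1 → (t * t) % s = 1 % s → False := by
    intro s hs hts
    apply key (u ^ t)
    rw [← pow_mul]
    exact pow_of_order u s _ (hup s hs) hts
  rcases unit_cases _ T hT hN1 with ⟨hTo, h6⟩ | h4'
  · by_cases h3 : t % 3 = 0
    · -- parity contradiction
      obtain ⟨P, N, hP, hN⟩ := htn β
      obtain ⟨Q, _, hQ, -⟩ := htn (((u⁻¹ : Rˣ) : R) * δ)
      have hbt : β ^ t = ((u⁻¹ : Rˣ) : R) + 2 * (((u⁻¹ : Rˣ) : R) * δ) := by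
        have : β ^ t = β ^ t * u * ((u⁻¹ : Rˣ) : R) := by simp [mul_assoc]
        rw [this, h]; ring
      have hinv : φ ((u⁻¹ : Rˣ) : R) = star (φ u) := by
        have h1 : φ u * φ ((u⁻¹ : Rˣ) : R) = 1 := by rw [← map_mul]; simp
        have h0 : φ u ≠ 0 := left_ne_zero_of_mul_eq_one h1
        exact mul_left_cancel₀ h0 (h1.trans hN1.symm)
      have hV : φ β ^ t + star (φ β) ^ t = ((T + 2 * Q : ℤ) : ℂ) := by
        rw [← star_pow, ← map_pow, hbt]
        push_cast
        rw [← hQ, ← hT]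
        simp only [map_add, map_mul, map_ofNat, star_add, star_mul', star_ofNat, hinv, star_star]
        ring
      have hodd : Odd (T + 2 * Q) := hTo.add_even (by simp)
      rcases Int.even_or_odd P with hPe | hPo
      · obtain ⟨V, hV', hd⟩ := lucas_int _ _ P N hP hN t
        rw [hV] at hV'
        have : T + 2 * Q = V := by exact_mod_cast hV'
        rw [this] at hodd
        exact (Int.not_even_iff_odd.mpr hodd) (hPe.trans_dvd (hd ht))
      · have hNo : Odd N := by
          have hbn : ((N ^ t : ℤ) : ℂ) = (((a ^ (m * t)) : ℤ) : ℂ) := by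
            have e1 : φ β ^ t * φ u = φ (1 + 2 * δ) := by rw [← h]; simp
            have e2 := congrArg star e1
            rw [star_mul', star_pow, hsα] at e2
            have e3 : φ (1 + 2 * δ) * φ (1 - 2 * δ) = (a : ℂ) ^ (m * t) := by
              rw [← map_mul, hα]; simp
            push_cast
            rw [← e3, ← e1, ← e2, ← hN]
            linear_combination (-(φ β ^ t * star (φ β) ^ t)) * hN1
          have hbn' : N ^ t = a ^ (m * t) := by exact_mod_cast hbn
          have hao : Odd a := by rw [Int.odd_iff]; omega
          have : Odd (N ^ t) := by rw [hbn']; exact hao.pow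
          exact (Int.odd_pow' (by omega)).mp this
        obtain ⟨U, _, _, hU, -, -, eU, -, -⟩ :=
          lucas_parity _ _ P N hP hN hPo hNo (t / 3)
        rw [show 3 * (t / 3) = t by omega, hV] at hU
        have : T + 2 * Q = U := by exact_mod_cast hU
        rw [this] at hodd
        exact (Int.not_even_iff_odd.mpr hodd) eU
    · refine key2 6 h6 ?_
      obtain ⟨q, rfl⟩ := ht
      have : (2 * q + 1) % 6 = 1 ∨ (2 * q + 1) % 6 = 5 := by omega
      rcases this with h | h <;> simp [Nat.mul_mod, h]
  · refine key2 4 h4' ?_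
    have : t % 4 = 1 ∨ t % 4 = 3 := by
      obtain ⟨q, rfl⟩ := ht; omega
    rcases this with h | h <;> simp [Nat.mul_mod, h]

theorem class_dvd (a : ℤ) (n : ℕ) (h4 : 4 ∣ a - 1) (ha : 1 < a) (hn : Odd n) (r : ℂ)
    (hr : r * r = ((1 - a ^ n : ℤ) : ℂ)) : n ∣ Nat.card (ClassGroup (𝓞 ℚ⟮r⟯)) := by
  have hn0 : 0 < n := hn.pos
  have hD : 1 - a ^ n < 0 := by
    have := one_lt_pow₀ ha hn0.ne'
    omega
  have hD4 : 4 ∣ 1 - a ^ n := by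
    have := sub_dvd_pow_sub_pow a 1 n
    rw [one_pow] at this
    have := h4.trans this
    omega
  have hrint : IsIntegral ℚ r := by
    refine IsIntegral.of_pow (n := 2) (by norm_num) ?_
    rw [pow_two, hr]
    have h : IsIntegral ℚ (algebraMap ℚ ℂ ((1 - a ^ n : ℤ) : ℚ)) := isIntegral_algebraMap
    rwa [map_intCast] at h
  have : FiniteDimensional ℚ ℚ⟮r⟯ := adjoin.finiteDimensional hrint
  have : NumberField ℚ⟮r⟯ := { to_charZero := inferInstance, to_finiteDimensional := inferInstance }
  let φ : 𝓞 ℚ⟮r⟯ →+* ℂ := (ℚ⟮r⟯.val : ℚ⟮r⟯ →+* ℂ).comp (algebraMap (𝓞 ℚ⟮r⟯) ℚ⟮r⟯)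
  have hφ : Function.Injective φ :=
    (ℚ⟮r⟯.val : ℚ⟮r⟯ →+* ℂ).injective.comp RingOfIntegers.coe_injective
  have htn : ∀ x : 𝓞 ℚ⟮r⟯, ∃ P N : ℤ, φ x + star (φ x) = P ∧ φ x * star (φ x) = N :=
    trace_norm (1 - a ^ n) hD r hr
  obtain ⟨F, hF⟩ := hD4
  have hmem : r / 2 ∈ ℚ⟮r⟯ :=
    div_mem (mem_adjoin_simple_self ℚ r) (ofNat_mem _ 2)
  have hint : IsIntegral ℤ (⟨r / 2, hmem⟩ : ℚ⟮r⟯) := by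
    refine IsIntegral.of_pow (n := 2) (by norm_num) ?_
    have : (⟨r / 2, hmem⟩ : ℚ⟮r⟯) ^ 2 = algebraMap ℤ ℚ⟮r⟯ F := by
      apply Subtype.ext
      rw [hF] at hr
      push_cast at hr
      simp
      linear_combination (1 / 4 : ℂ) * hr
    rw [this]; exact isIntegral_algebraMap
  let δ : 𝓞 ℚ⟮r⟯ := ⟨⟨r / 2, hmem⟩, hint⟩
  have hφδ : φ δ = r / 2 := rfl
  have hδs : star (φ δ) = -φ δ := by
    rw [hφδ, div_eq_mul_inv, star_mul', root_props _ hD r hr]; simp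
  have hα : (1 + 2 * δ) * (1 - 2 * δ) = ((a : ℤ) : 𝓞 ℚ⟮r⟯) ^ n := by
    apply hφ
    simp only [map_add, map_sub, map_mul, map_one, map_ofNat, hφδ, map_pow, map_intCast]
    push_cast at hr
    linear_combination -hr
  have hcop : IsCoprime (1 + 2 * δ) (1 - 2 * δ) := by
    have h2 : IsCoprime (2 : ℤ) (a ^ n) := by
      refine IsCoprime.pow_right ?_
      obtain ⟨q, hq⟩ := h4
      exact ⟨-2 * q, 1, by linarith⟩
    obtain ⟨x, y, hxy⟩ := h2
    have hxy' := congrArg (Int.cast : ℤ → 𝓞 ℚ⟮r⟯) hxy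
    push_cast at hxy'
    refine ⟨x + y * (1 - 2 * δ), x, ?_⟩
    rw [← hα] at hxy'
    linear_combination hxy'
  have hα0 : (1 + 2 * δ) ≠ 0 := by
    intro h0
    rw [h0, zero_mul] at hα
    have : (a : 𝓞 ℚ⟮r⟯) = 0 := pow_eq_zero_iff hn0.ne' |>.mp hα.symm
    have : a = 0 := by exact_mod_cast this
    omega
  obtain ⟨I, hI⟩ := exists_eq_pow_of_mul_eq_pow_of_coprime
    (a := Ideal.span {1 + 2 * δ}) (b := Ideal.span {1 - 2 * δ})
    (c := Ideal.span {((a : ℤ) : 𝓞 ℚ⟮r⟯)}) (n := n)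
    ((Ideal.isCoprime_span_singleton_iff _ _).mpr hcop) (by
      rw [Ideal.span_singleton_mul_span_singleton, hα, Ideal.span_singleton_pow])
  have hI0 : I ≠ ⊥ := by
    rintro rfl
    rw [← Ideal.zero_eq_bot, zero_pow hn0.ne', Ideal.zero_eq_bot, Ideal.span_singleton_eq_bot] at hI
    exact hα0 hI
  let J : nonZeroDivisors (Ideal (𝓞 ℚ⟮r⟯)) := ⟨I, mem_nonZeroDivisors_of_ne_zero hI0⟩
  have hpow : ∀ j : ℕ, ClassGroup.mk0 J ^ j = 1 ↔ (I ^ j).IsPrincipal := by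
    intro j
    rw [← map_pow, ClassGroup.mk0_eq_one_iff (J ^ j).2]
    rfl
  have hc : ClassGroup.mk0 J ^ n = 1 := by
    rw [hpow, ← hI]; exact ⟨_, rfl⟩
  have hmn := orderOf_dvd_of_pow_eq_one hc
  obtain ⟨t, ht⟩ := hmn
  set m := orderOf (ClassGroup.mk0 J) with hmdef
  have hm : 0 < m := Nat.pos_of_ne_zero (by rintro h; rw [h] at ht; omega)
  have hto : Odd t := by rw [ht] at hn; exact (Nat.odd_mul.mp hn).2
  by_cases ht1 : t = 1
  · rw [ht, ht1, mul_one]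
    exact orderOf_dvd_natCard _
  exfalso
  obtain ⟨β, hβ⟩ := (hpow m).mp (pow_orderOf_eq_one _)
  rw [ht, pow_mul, hβ, Ideal.submodule_span_eq, Ideal.span_singleton_pow,
    Ideal.span_singleton_eq_span_singleton] at hI
  obtain ⟨u, hu⟩ := hI.symm
  rw [ht] at hα
  exact no_power φ hφ htn a h4 ha m t hm hto (by have := hto.pos; omega) δ β hδs hα u hu

theorem stmt_16 (k n : ℕ) (hk : 3 ≤ k) (hko : Odd k) (hn : 3 ≤ n) (hno : Odd n)
    (d a : ℤ) (hd : d = (1 - 2 * (k : ℤ) ^ n) ^ n) (ha : a = 2 * (k : ℤ) ^ n - 1) :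
    d + 1 = 1 - a ^ n ∧ 53 ≤ a ∧ n ∣ quadClassNumber (d + 1) := by
  have hda : d + 1 = 1 - a ^ n := by
    rw [hd, ha, show (1 - 2 * (k : ℤ) ^ n) = -(2 * (k : ℤ) ^ n - 1) by ring, hno.neg_pow]; ring
  have ha53 : 53 ≤ a := by
    have h1 : 3 ^ 3 ≤ k ^ n := (Nat.pow_le_pow_left hk 3).trans (Nat.pow_le_pow_right (by omega) hn)
    have h2 : ((3 ^ 3 : ℕ) : ℤ) ≤ ((k ^ n : ℕ) : ℤ) := by exact_mod_cast h1
    push_cast at h2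
    omega
  refine ⟨hda, ha53, ?_⟩
  have h4 : 4 ∣ a - 1 := by
    have : Odd ((k : ℤ) ^ n) := Odd.pow (by exact_mod_cast hko)
    obtain ⟨q, hq⟩ := this
    exact ⟨q, by rw [ha, hq]; ring⟩
  unfold quadClassNumber quadField
  rw [hda]
  refine class_dvd a n h4 (by omega) hno _ ?_
  rw [← pow_two, ← Complex.cpow_nat_mul]
  norm_num
end

section
/- Let k ≥ 3 and n ≥ 3 be odd integers and set d = (1 − 2k^n)^n. Then 4d + 1 = 1 − 4a^n with a = 2k^n − 1 ≥ 2, and n divides the class number of the imaginary quadratic field ℚ(√(4d+1)); in fact the ideal class group of ℚ(√(4d+1)) contains an element of order n. -/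
open IntermediateField NumberField

theorem isInt_rat (q : ℚ) (h : IsIntegral ℤ (q : ℂ)) : ∃ z : ℤ, (z : ℚ) = q := by
  have h' : IsIntegral ℤ q := by
    have : (q : ℂ) = algebraMap ℚ ℂ q := by simp
    rw [this] at h
    exact (isIntegral_algebraMap_iff (algebraMap ℚ ℂ).injective).1 h
  obtain ⟨z, hz⟩ := IsIntegrallyClosed.isIntegral_iff.1 h'
  exact ⟨z, by simpa using hz⟩

theorem lucas_aux (x y : ℂ) (b : ℤ) (h1 : x + y = 1) (h2 : x * y = b) (m : ℕ) :
    (∃ e c : ℤ, 2 * e = (m + 3) * m ∧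
      x ^ (m + 3) + y ^ (m + 3) = ((1 - (m + 3) * b + e * b ^ 2 + b ^ 3 * c : ℤ) : ℂ)) ∧
    (∃ e c : ℤ, 2 * e = (m + 4) * (m + 1) ∧
      x ^ (m + 4) + y ^ (m + 4) = ((1 - (m + 4) * b + e * b ^ 2 + b ^ 3 * c : ℤ) : ℂ)) := by
  induction m with
  | zero =>
    obtain rfl : y = 1 - x := by linear_combination h1
    refine ⟨⟨0, 0, by simp, ?_⟩, ⟨2, 0, by simp, ?_⟩⟩ <;> push_cast <;> rw [← h2] <;> ring
  | succ m ih =>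
    obtain ⟨⟨e, c, he, h⟩, ⟨e', c', he', h'⟩⟩ := ih
    refine ⟨⟨e', c', by push_cast; linarith, ?_⟩, ⟨e' + m + 3, c' - e - b * c, ?_, ?_⟩⟩
    · push_cast at h' ⊢
      rw [show m + 1 + 3 = m + 4 by ring]
      linear_combination h'
    · push_cast; linear_combination he'
    · push_cast at h h' ⊢
      have hy : y = 1 - x := by linear_combination h1
      have : x ^ (m + 1 + 4) + y ^ (m + 1 + 4) = (x ^ (m + 4) + y ^ (m + 4)) * (x + y)
        - (x * y) * (x ^ (m + 3) + y ^ (m + 3)) := by ring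
      rw [this, h, h', h1, h2]; ring

theorem core_s17 (p : ℕ) (hp : p.Prime) (hp3 : 3 ≤ p) (x y : ℂ) (hx : IsIntegral ℤ x)
    (hy : IsIntegral ℤ y) (s b : ℤ) (h1 : x + y = s) (h2 : x * y = b) (hb : 2 ≤ b)
    (h : x ^ p + y ^ p = 1) : False := by
  have hpo : Odd p := hp.odd_of_ne_two (by omega)
  have pz : (p : ℤ) ∣ 2 → False := fun hd => by
    have := Int.le_of_dvd (by norm_num) hd
    omega
  -- s is a unit
  have hs : s ∣ 1 := by
    let X : integralClosure ℤ ℂ := ⟨x, hx⟩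
    let Y : integralClosure ℤ ℂ := ⟨y, hy⟩
    obtain ⟨w, hw⟩ := Odd.add_dvd_pow_add_pow X Y hpo
    have hw' : (1 : ℂ) = s * (w : ℂ) := by
      have := congrArg (Subtype.val) hw
      push_cast at this
      simp only [X, Y] at this
      rw [← h, this, ← h1]
    have hs0 : (s : ℂ) ≠ 0 := by rintro h0; rw [h0] at hw'; simp at hw'
    obtain ⟨z, hz⟩ := isInt_rat ((1 : ℚ) / s) (by
      have : (((1 : ℚ) / s : ℚ) : ℂ) = w := by
        push_cast; field_simp; exact hw'
      rw [this]; exact w.2)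
    have hs0' : (s : ℚ) ≠ 0 := by exact_mod_cast hs0
    refine ⟨z, ?_⟩
    have : (1 : ℚ) = s * z := by rw [hz]; field_simp
    exact_mod_cast this
  obtain ⟨r, hri, hr⟩ : ∃ r : ℂ, IsIntegral ℤ r ∧ (s : ℂ) ^ p = 1 + p * r := by
    let X : integralClosure ℤ ℂ := ⟨x, hx⟩
    let Y : integralClosure ℤ ℂ := ⟨y, hy⟩
    obtain ⟨r, hr⟩ := exists_add_pow_prime_eq hp X Y
    refine ⟨((X * Y * r : integralClosure ℤ ℂ) : ℂ), (X * Y * r).2, ?_⟩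
    have := congrArg (Subtype.val) hr
    push_cast at this ⊢
    simp only [X, Y] at this ⊢
    rw [h1, h] at this
    rw [this]; ring
  have hs1 : s = 1 := by
    rcases Int.isUnit_iff.1 (isUnit_of_dvd_one hs) with h' | h'
    · exact h'
    · exfalso
      rw [h'] at hr
      push_cast at hr
      rw [hpo.neg_one_pow] at hr
      have hp0 : (p : ℂ) ≠ 0 := by exact_mod_cast hp.ne_zero
      obtain ⟨z, hz⟩ := isInt_rat ((-2 : ℚ) / p) (by
        have : (((-2 : ℚ) / p : ℚ) : ℂ) = r := by
          push_cast; field_simp; linear_combination hr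
        rw [this]; exact hri)
      have hp0' : (p : ℚ) ≠ 0 := by exact_mod_cast hp.ne_zero
      apply pz
      refine ⟨-z, ?_⟩
      have : (2 : ℚ) = p * (-z) := by rw [hz]; field_simp
      exact_mod_cast this
  subst hs1
  obtain ⟨m, rfl⟩ : ∃ m, p = m + 3 := ⟨p - 3, by omega⟩
  obtain ⟨e, c, he, hec⟩ := (lucas_aux x y b (by simpa using h1) h2 m).1
  rw [h] at hec
  have hec' : (1 : ℤ) = 1 - (m + 3) * b + e * b ^ 2 + b ^ 3 * c := by exact_mod_cast hec
  have h3 : ((m + 3 : ℕ) : ℤ) = b * (e + b * c) := by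
    push_cast
    apply mul_left_cancel₀ (show b ≠ 0 by omega)
    linear_combination hec'
  have hbp : b.natAbs ∣ m + 3 := by
    have : b ∣ ((m + 3 : ℕ) : ℤ) := ⟨_, h3⟩
    exact Int.natAbs_dvd_natAbs.2 this
  have hb' : b = m + 3 := by
    rcases (Nat.dvd_prime hp).1 hbp with h' | h' <;> omega
  apply pz
  have h4 : 1 = e + b * c := by
    apply mul_left_cancel₀ (show b ≠ 0 by omega)
    rw [← h3, hb']; push_cast; ring
  refine ⟨m + 2 * c, ?_⟩
  push_cast
  rw [hb'] at h4
  linear_combination 2 * h4 + he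

theorem three_aux (A : ℤ) (hA : 2 ≤ A) (f : ℤ) (h : 1 - 4 * A ^ 3 = -3 * f ^ 2) : False := by
  have hodd : Odd f := by
    by_contra hf
    rw [Int.not_odd_iff_even] at hf
    obtain ⟨e, rfl⟩ := hf
    have : 1 = 4 * (A ^ 3 - 3 * e ^ 2) := by linear_combination h
    omega
  obtain ⟨e, rfl⟩ := hodd
  have hA3 : 8 ≤ A ^ 3 := by nlinarith [pow_le_pow_left₀ (by norm_num) hA 3]
  have key : (e + 1) ^ 3 + (-e) ^ 3 = A ^ 3 := by
    apply mul_left_cancel₀ (show (4 : ℤ) ≠ 0 by norm_num)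
    linear_combination h
  refine fermatLastTheoremFor_iff_int.1 fermatLastTheoremThree (e + 1) (-e) A ?_ ?_ ?_ key
  · intro h0
    obtain rfl : e = -1 := by omega
    norm_num at key; omega
  · intro h0
    obtain rfl : e = 0 := by omega
    norm_num at key; omega
  · omega

/-- The chosen square root of `D`. -/
noncomputable def sqD (D : ℤ) : ℂ := (D : ℂ) ^ ((1 : ℂ) / 2)

theorem sqD_sq (D : ℤ) : sqD D ^ 2 = D := by
  unfold sqD
  have := Complex.cpow_nat_inv_pow (D : ℂ) (n := 2) (by norm_num)
  simpa using this

theorem sqD_conj (D : ℤ) (hD : D < 0) : (starRingEnd ℂ) (sqD D) = - sqD D := by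
  have h := sqD_sq D
  have hD' : (D : ℝ) < 0 := by exact_mod_cast hD
  have hre := congrArg Complex.re h
  have him := congrArg Complex.im h
  simp [pow_two] at hre him
  have h0 : (sqD D).re = 0 := by
    by_contra h0
    have : (sqD D).im = 0 := by
      apply mul_left_cancel₀ h0; linarith
    rw [this] at hre
    nlinarith [mul_self_nonneg (sqD D).re]
  apply Complex.ext <;> simp [h0]

theorem sqD_int (D : ℤ) : IsIntegral ℚ (sqD D) :=
  ⟨Polynomial.X ^ 2 - Polynomial.C (D : ℚ), Polynomial.monic_X_pow_sub_C _ (by norm_num), by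
    rw [Polynomial.eval₂_sub, Polynomial.eval₂_pow, Polynomial.eval₂_X, Polynomial.eval₂_C]
    simp [sqD_sq]⟩

theorem quad_repr (D : ℤ) (x : ℂ) (hx : x ∈ quadField D) :
    ∃ r s : ℚ, x = r + s * sqD D := by
  have hx' : x ∈ (quadField D).toSubalgebra := hx
  have : (quadField D).toSubalgebra = Algebra.adjoin ℚ {sqD D} :=
    adjoin_simple_toSubalgebra_of_isAlgebraic (sqD_int D).isAlgebraic
  rw [this] at hx'
  clear hx
  induction hx' using Algebra.adjoin_induction with
  | mem x hx => exact ⟨0, 1, by simp_all⟩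
  | algebraMap r => exact ⟨r, 0, by simp⟩
  | add x y hx hy h1 h2 =>
    obtain ⟨r, s, h⟩ := h1
    obtain ⟨r', s', h'⟩ := h2
    exact ⟨r + r', s + s', by rw [h, h']; push_cast; ring⟩
  | mul x y hx hy h1 h2 =>
    obtain ⟨r, s, h⟩ := h1
    obtain ⟨r', s', h'⟩ := h2
    refine ⟨r * r' + s * s' * D, r * s' + s * r', ?_⟩
    rw [h, h']; push_cast; linear_combination (s : ℂ) * s' * sqD_sq D

instance quad_nf (D : ℤ) : NumberField (quadField D) where
  to_finiteDimensional := adjoin.finiteDimensional (sqD_int D)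

/-- the complex embedding of the integers -/
noncomputable def emb (D : ℤ) : 𝓞 (quadField D) →+* ℂ :=
  (quadField D).val.toRingHom.comp (algebraMap (𝓞 (quadField D)) (quadField D))

theorem emb_inj (D : ℤ) : Function.Injective (emb D) := by
  intro x y h
  exact RingOfIntegers.ext (Subtype.ext h)

theorem emb_mem (D : ℤ) (x) : emb D x ∈ quadField D := (algebraMap (𝓞 (quadField D)) (quadField D) x).2

theorem emb_int (D : ℤ) (x) : IsIntegral ℤ (emb D x) :=
  x.2.map (((quadField D).val).restrictScalars ℤ)

theorem emb_surj (D : ℤ) (z : ℂ) (h : z ∈ quadField D) (hz : IsIntegral ℤ z) : ∃ x, emb D x = z := by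
  refine ⟨⟨⟨z, h⟩, ?_⟩, rfl⟩
  exact (isIntegral_algHom_iff (((quadField D).val).restrictScalars ℤ) Subtype.val_injective).1 hz

theorem emb_tr_norm (D : ℤ) (hD : D < 0) (x) : ∃ t N : ℤ,
    emb D x + (starRingEnd ℂ) (emb D x) = t ∧ emb D x * (starRingEnd ℂ) (emb D x) = N := by
  obtain ⟨r, s, h⟩ := quad_repr D _ (emb_mem D x)
  have hc : (starRingEnd ℂ) (emb D x) = r - s * sqD D := by
    rw [h]; simp [sqD_conj D hD]; ring
  have hi := emb_int D x
  have hi' : IsIntegral ℤ ((starRingEnd ℂ) (emb D x)) :=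
    hi.map ((starRingEnd ℂ).toIntAlgHom)
  obtain ⟨t, ht⟩ := isInt_rat (2 * r) (by
    have he : ((2 * r : ℚ) : ℂ) = emb D x + (starRingEnd ℂ) (emb D x) := by
      rw [hc, h]; push_cast; ring
    rw [he]; exact hi.add hi')
  obtain ⟨N, hN⟩ := isInt_rat (r ^ 2 - s ^ 2 * D) (by
    have he : ((r ^ 2 - s ^ 2 * D : ℚ) : ℂ) = emb D x * (starRingEnd ℂ) (emb D x) := by
      rw [hc, h]; push_cast; linear_combination (s : ℂ) ^ 2 * sqD_sq D
    rw [he]; exact hi.mul hi')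
  refine ⟨t, N, ?_, ?_⟩
  · rw [hc, h, show ((t : ℤ) : ℂ) = ((t : ℚ) : ℂ) by simp, ht]; push_cast; ring
  · rw [hc, h, show ((N : ℤ) : ℂ) = ((N : ℚ) : ℂ) by simp, hN]; push_cast
    linear_combination -(s : ℂ) ^ 2 * sqD_sq D

theorem unit_aux (D : ℤ) (hD : D < 0) (u : (𝓞 (quadField D))ˣ) :
    (u : 𝓞 (quadField D)) ^ 12 = 1 ∧
    ((u : 𝓞 (quadField D)) ^ 4 = 1 ∨ ∃ f : ℤ, D = -3 * f ^ 2) := by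
  obtain ⟨t, N, ht, hN⟩ := emb_tr_norm D hD u
  obtain ⟨t', N', ht', hN'⟩ := emb_tr_norm D hD (u⁻¹ : (𝓞 (quadField D))ˣ)
  set z := emb D u with hz
  set w := emb D (u⁻¹ : (𝓞 (quadField D))ˣ) with hw
  have hzw : z * w = 1 := by rw [hz, hw, ← map_mul]; simp
  have hNN : N * N' = 1 := by
    have : (N : ℂ) * N' = 1 := by
      rw [← hN, ← hN']
      calc _ = (z * w) * (starRingEnd ℂ) (z * w) := by rw [map_mul]; ring
        _ = 1 := by rw [hzw]; simp
    exact_mod_cast this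
  rw [Complex.mul_conj] at hN
  have hNr : Complex.normSq z = N := by exact_mod_cast hN
  have hN0 : 0 ≤ N := by
    have := Complex.normSq_nonneg z
    rw [hNr] at this; exact_mod_cast this
  have hN1 : N = 1 := Int.eq_one_of_mul_eq_one_right hN0 hNN
  have htr : 2 * z.re = t := by
    rw [Complex.add_conj] at ht; exact_mod_cast ht
  have ht4 : t ^ 2 ≤ 4 := by
    rw [Complex.normSq_apply, hN1] at hNr
    have : (t : ℝ) ^ 2 ≤ 4 := by
      rw [← htr]; push_cast at hNr; nlinarith [mul_self_nonneg z.im]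
    exact_mod_cast this
  have hquad : z ^ 2 = t * z - 1 := by
    have h1 : z * (starRingEnd ℂ) z = 1 := by rw [Complex.mul_conj, hNr, hN1]; simp
    linear_combination -h1 + z * ht
  have back : ∀ m : ℕ, z ^ m = 1 → (u : 𝓞 (quadField D)) ^ m = 1 := by
    intro m hm
    apply emb_inj D
    rw [map_pow, map_one]; exact hm
  have ht1 : -2 ≤ t := by nlinarith
  have ht2 : t ≤ 2 := by nlinarith
  have hthird : (t = 1 ∨ t = -1) → z ^ 12 = 1 ∧ ∃ f : ℤ, D = -3 * f ^ 2 := by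
    intro htt
    have htsq : (t : ℂ) ^ 2 = 1 := by rcases htt with h | h <;> simp [h]
    constructor
    · have h3 : z ^ 3 = -t := by
        linear_combination (z + t) * hquad + z * htsq
      rw [show 12 = 3 * 4 by norm_num, pow_mul, h3]
      linear_combination ((t : ℂ) ^ 2 + 1) * htsq
    · obtain ⟨r, s, h⟩ := quad_repr D _ (emb_mem D u)
      rw [← hz] at h
      have hc : (starRingEnd ℂ) z = r - s * sqD D := by
        rw [h]; simp [sqD_conj D hD]; ring
      have h2r : (2 * r : ℂ) = t := by rw [← ht, hc, h]; ring
      have hsq : 4 * (s : ℂ) ^ 2 * D = -3 := by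
        have h5 : 2 * (s : ℂ) * sqD D = 2 * z - t := by rw [h, ← h2r]; ring
        have h6 : (2 * z - t) ^ 2 = -3 := by
          linear_combination 4 * hquad + htsq
        rw [← h6, ← h5, ← sqD_sq]; ring
      have hsq' : 4 * s ^ 2 * D = -3 := by exact_mod_cast hsq
      have hDq : (D : ℚ) ≠ 0 := by exact_mod_cast hD.ne
      have hm : (2 * s * D) ^ 2 = ((-3 * D : ℤ) : ℚ) := by
        push_cast; linear_combination (D : ℚ) * hsq'
      obtain ⟨m, hm'⟩ : ∃ m : ℤ, (m : ℚ) = 2 * s * D := by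
        obtain ⟨m, hm'⟩ := IsIntegrallyClosed.isIntegral_iff.1
          (show IsIntegral ℤ (2 * s * D : ℚ) from
            IsIntegral.of_pow (n := 2) (by norm_num) (by
              rw [hm]; exact isIntegral_algebraMap (R := ℤ) (A := ℚ) (x := -3 * D)))
        exact ⟨m, by simpa using hm'⟩
      rw [← hm'] at hm
      have hm2 : m ^ 2 = -3 * D := by exact_mod_cast hm
      have h3m : (3 : ℤ) ∣ m := Int.prime_three.dvd_of_dvd_pow (n := 2) ⟨-D, by rw [hm2]; ring⟩
      obtain ⟨f, rfl⟩ := h3m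
      exact ⟨f, by nlinarith⟩
  obtain rfl | rfl | rfl | rfl | rfl : t = -2 ∨ t = -1 ∨ t = 0 ∨ t = 1 ∨ t = 2 := by omega
  · have : z = -1 := by
      have : (z + 1) ^ 2 = 0 := by push_cast at hquad; linear_combination hquad
      have := pow_eq_zero_iff (two_ne_zero) |>.1 this
      linear_combination this
    exact ⟨back _ (by rw [this]; norm_num), .inl (back _ (by rw [this]; norm_num))⟩
  · have := hthird (by simp); exact ⟨back _ this.1, .inr this.2⟩
  · have : z ^ 4 = 1 := by
      push_cast at hquad; linear_combination (z ^ 2 - 1) * hquad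
    exact ⟨back _ (by rw [show 12 = 4 * 3 by norm_num, pow_mul, this]; norm_num), .inl (back _ this)⟩
  · have := hthird (by simp); exact ⟨back _ this.1, .inr this.2⟩
  · have : z = 1 := by
      have : (z - 1) ^ 2 = 0 := by push_cast at hquad; linear_combination hquad
      have := pow_eq_zero_iff (two_ne_zero) |>.1 this
      linear_combination this
    exact ⟨back _ (by rw [this]; norm_num), .inl (back _ (by rw [this]; norm_num))⟩

theorem unit_pow (D : ℤ) (hD : D < 0) (p : ℕ) (hp : p.Prime) (hp3 : 3 ≤ p)
    (h3 : p = 3 → ∀ f : ℤ, D ≠ -3 * f ^ 2) (u : (𝓞 (quadField D))ˣ) :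
    ∃ v : 𝓞 (quadField D), (u : 𝓞 (quadField D)) = v ^ p := by
  obtain ⟨h12, h4⟩ := unit_aux D hD u
  by_cases h : p = 3
  · subst h
    rcases h4 with h4 | ⟨f, hf⟩
    · refine ⟨(u : 𝓞 (quadField D)) ^ 3, ?_⟩
      rw [← pow_mul, show 3 * 3 = 4 * 2 + 1 by norm_num, pow_succ, pow_mul, h4]; simp
    · exact absurd hf (h3 rfl f)
  · refine ⟨(u : 𝓞 (quadField D)) ^ p, ?_⟩
    have h2' : p % 2 ≠ 0 := fun h0 => by
      have := (Nat.prime_dvd_prime_iff_eq Nat.prime_two hp).1 (Nat.dvd_of_mod_eq_zero h0); omega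
    have h3' : p % 3 ≠ 0 := fun h0 => by
      have := (Nat.prime_dvd_prime_iff_eq Nat.prime_three hp).1 (Nat.dvd_of_mod_eq_zero h0); omega
    have hmod : p * p % 12 = 1 := by
      have : p % 12 = 1 ∨ p % 12 = 5 ∨ p % 12 = 7 ∨ p % 12 = 11 := by omega
      rcases this with h | h | h | h <;> simp [Nat.mul_mod, h]
    rw [← pow_mul, ← Nat.div_add_mod (p * p) 12, hmod, pow_succ, pow_mul, h12]; simp

theorem main_aux (n : ℕ) (hn : 3 ≤ n) (hno : Odd n) (a : ℤ) (ha : 2 ≤ a) (D : ℤ)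
    (hDa : D = 1 - 4 * a ^ n) :
    ∃ g : ClassGroup (𝓞 (quadField D)), orderOf g = n := by
  have han : 2 ≤ a ^ n := le_trans ha (le_self_pow₀ (by omega) (by omega))
  have hD : D < 0 := by omega
  have hmem : sqD D ∈ quadField D := mem_adjoin_simple_self ℚ _
  have hDa' : sqD D ^ 2 = 1 - 4 * (a : ℂ) ^ n := by rw [sqD_sq, hDa]; push_cast; ring
  obtain ⟨α, hα⟩ : ∃ α, emb D α = (1 + sqD D) / 2 := by
    apply emb_surj
    · exact div_mem (add_mem (one_mem _) hmem) (by exact_mod_cast (IntermediateField.natCast_mem (quadField D) 2))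
    · refine ⟨Polynomial.X ^ 2 - Polynomial.X + Polynomial.C (a ^ n), by monicity!, ?_⟩
      rw [Polynomial.eval₂_add, Polynomial.eval₂_sub, Polynomial.eval₂_pow, Polynomial.eval₂_X,
        Polynomial.eval₂_C]
      push_cast
      simp only [map_pow, eq_intCast]
      linear_combination hDa' / 4
  have hαα : α * (1 - α) = (a : 𝓞 (quadField D)) ^ n := by
    apply emb_inj D
    simp only [map_mul, map_sub, map_one, map_pow, map_intCast, hα]
    linear_combination -hDa' / 4
  have hconj : (starRingEnd ℂ) ((1 + sqD D) / 2) = (1 - sqD D) / 2 := by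
    rw [map_div₀, map_add, sqD_conj D hD, map_one, Complex.conj_ofNat]; ring
  have hαc : emb D α + (starRingEnd ℂ) (emb D α) = 1 := by
    rw [hα, hconj]; ring
  have hα0 : α ≠ 0 := by
    rintro rfl; simp at hαc
  have hcop : IsCoprime (Ideal.span {α}) (Ideal.span {1 - α}) :=
    (Ideal.isCoprime_span_singleton_iff _ _).2 ⟨1, 1, by ring⟩
  obtain ⟨I, hI⟩ : ∃ I : Ideal (𝓞 (quadField D)), Ideal.span {α} = I ^ n := by
    apply exists_eq_pow_of_mul_eq_pow (b := Ideal.span {1 - α})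
      (c := Ideal.span {(a : 𝓞 (quadField D))})
    · rw [Ideal.isUnit_iff, eq_top_iff, ← Ideal.isCoprime_iff_sup_eq.1 hcop]
      exact sup_le (Ideal.dvd_iff_le.1 (gcd_dvd_left _ _)) (Ideal.dvd_iff_le.1 (gcd_dvd_right _ _))
    · rw [Ideal.span_singleton_mul_span_singleton, hαα, Ideal.span_singleton_pow]
  have hI0 : I ≠ ⊥ := by
    rintro rfl
    rw [← Ideal.zero_eq_bot, zero_pow (by omega), Ideal.zero_eq_bot, Ideal.span_singleton_eq_bot] at hI
    exact hα0 hI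
  let J : nonZeroDivisors (Ideal (𝓞 (quadField D))) := ⟨I, mem_nonZeroDivisors_of_ne_zero hI0⟩
  refine ⟨ClassGroup.mk0 J, orderOf_eq_of_pow_and_pow_div_prime (by omega) ?_ ?_⟩
  · rw [← map_pow, ClassGroup.mk0_eq_one_iff]
    exact ⟨⟨α, by rw [SubmonoidClass.coe_pow]; exact hI.symm⟩⟩
  · intro p hp hpn hone
    have hp3 : 3 ≤ p := by
      have := hp.two_le
      have : p ≠ 2 := by
        rintro rfl
        obtain ⟨c, hc⟩ := hno
        omega
      omega
    obtain ⟨m, rfl⟩ := hpn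
    rw [Nat.mul_div_cancel_left _ hp.pos, ← map_pow, ClassGroup.mk0_eq_one_iff] at hone
    obtain ⟨⟨β, hβ⟩⟩ := hone
    have hβ' : I ^ m = Ideal.span {β} := by rw [SubmonoidClass.coe_pow] at hβ; exact hβ
    have hass : Associated (β ^ p) α := by
      rw [← Ideal.span_singleton_eq_span_singleton, ← Ideal.span_singleton_pow, ← hβ', hI,
        ← pow_mul, mul_comm]
    obtain ⟨u, hu⟩ := hass
    have hm0 : m ≠ 0 := by rintro rfl; omega
    obtain ⟨v, hv⟩ := unit_pow D hD p hp hp3 (by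
      rintro rfl f hf
      refine three_aux (a ^ m) (le_trans ha (le_self_pow₀ (by omega) hm0)) f ?_
      rw [← hf, hDa, ← pow_mul, mul_comm m]) u
    rw [hv, ← mul_pow] at hu
    obtain ⟨s, b, hs, hb⟩ := emb_tr_norm D hD (β * v)
    set γ := emb D (β * v) with hγ
    have hγα : γ ^ p = emb D α := by rw [hγ, ← map_pow, hu]
    have hbr : Complex.normSq γ = b := by rw [Complex.mul_conj] at hb; exact_mod_cast hb
    have hb0 : 0 ≤ b := by
      have := Complex.normSq_nonneg γ
      rw [hbr] at this; exact_mod_cast this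
    have hbp : b ^ p = a ^ (p * m) := by
      have : (b : ℂ) ^ p = (a : ℂ) ^ (p * m) := by
        rw [← hb, mul_pow, ← map_pow (starRingEnd ℂ), hγα, hα, hconj]
        linear_combination -hDa' / 4
      exact_mod_cast this
    have hb2 : 2 ≤ b := by
      by_contra hlt
      obtain rfl | rfl : b = 0 ∨ b = 1 := by omega
      · rw [zero_pow hp.ne_zero] at hbp; omega
      · rw [one_pow] at hbp; omega
    have hi := emb_int D (β * v)
    exact core_s17 p hp hp3 γ ((starRingEnd ℂ) γ) hi (hi.map ((starRingEnd ℂ).toIntAlgHom)) s b hs hb hb2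
      (by rw [← map_pow (starRingEnd ℂ), hγα, hαc])

theorem stmt_17 (k n : ℕ) (hk : 3 ≤ k) (hko : Odd k) (hn : 3 ≤ n) (hno : Odd n)
    (d a : ℤ) (hd : d = (1 - 2 * (k : ℤ) ^ n) ^ n) (ha : a = 2 * (k : ℤ) ^ n - 1) :
    4 * d + 1 = 1 - 4 * a ^ n ∧ 2 ≤ a ∧ n ∣ quadClassNumber (4 * d + 1) ∧
      ∃ g : ClassGroup (𝓞 (quadField (4 * d + 1))), orderOf g = n := by
  have hda : d = -a ^ n := by
    rw [hd, ha, ← hno.neg_pow]; congr 1; ring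
  have h1 : 4 * d + 1 = 1 - 4 * a ^ n := by rw [hda]; ring
  have h2 : 2 ≤ a := by
    have : (k : ℤ) ≤ (k : ℤ) ^ n := le_self_pow₀ (by omega) (by omega)
    omega
  obtain ⟨g, hg⟩ := main_aux n hn hno a h2 _ h1
  refine ⟨h1, h2, ?_, g, hg⟩
  rw [← hg]
  exact orderOf_dvd_natCard g
end
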